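/- For every x ∈ ℝ, lim_{t→b−} C(t,x) = 1. -/

import Mathlib

/-!
As `t → b⁻` the function `A(t, ·)` converges to `|·|`, and its derivative
`E[sgn(y + s z) exp(m'|y + s z|)] / E[exp(m'|y + s z|)]`, with `s = √(b - t)`, is bounded by `1` and
converges to `sgn y` along every family of points tending to some `y ≠ 0`. Both limits come from
one dominated convergence statement, `tendsto_gaussian_smoothing`. Writing `C` as the quotient of
`E[(∂ₓA)² exp(m A)]` by `E[exp(m A)]`, both taken at `x + z√(t - a)`, and using
`A(t, y) ≤ |y| + K` with `K` independent of `t`, a second application of dominated convergence shows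
that numerator and denominator have the same positive limit `E[exp(m |x + z√(b - a)|)]`: the
exceptional point `x + z√(b - a) = 0`, where the derivative need not converge to `±1`, is hit for a
single `z` only.
-/

open MeasureTheory ProbabilityTheory

/-- `A(t,x) = (1/m') log E[exp(m'|x + z√(b-t)|)]` for a standard Gaussian `z`. -/
noncomputable def A (b m' t x : ℝ) : ℝ :=
  (1 / m') * Real.log (∫ z, Real.exp (m' * |x + z * Real.sqrt (b - t)|) ∂(gaussianReal 0 1))

/-- `B(t,x) = (1/m) log E[exp(m A(t, x + z√(t-a)))]` for a standard Gaussian `z`. -/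
noncomputable def B (a b m m' t x : ℝ) : ℝ :=
  (1 / m) * Real.log
    (∫ z, Real.exp (m * A b m' t (x + z * Real.sqrt (t - a))) ∂(gaussianReal 0 1))

/-- `V(t,x,y) = exp(m (A(t,y) - B(t,x)))`. -/
noncomputable def V (a b m m' t x y : ℝ) : ℝ :=
  Real.exp (m * (A b m' t y - B a b m m' t x))

/-- `C(t,x) = E[(∂ₓA(t, x+z√(t-a)))² V(t,x,x+z√(t-a))]`. -/
noncomputable def C (a b m m' t x : ℝ) : ℝ :=
  ∫ z, (deriv (A b m' t) (x + z * Real.sqrt (t - a))) ^ 2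
      * V a b m m' t x (x + z * Real.sqrt (t - a)) ∂(gaussianReal 0 1)

open Filter Topology

/-! ### Gaussian smoothing of functions of exponential growth -/

lemma integrable_exp_abs_gaussian (c : ℝ) :
    Integrable (fun z : ℝ => Real.exp (c * |z|)) (gaussianReal 0 1) := by
  apply integrable_exp_mul_abs (integrable_exp_mul_gaussianReal c)
    (integrable_exp_mul_gaussianReal (-c))

lemma exp_abs_add_le {c x s R S : ℝ} (hc : 0 ≤ c) (hx : |x| ≤ R) (hs : |s| ≤ S) (z : ℝ) :
    Real.exp (c * |x + z * s|) ≤ Real.exp (c * R) * Real.exp (c * S * |z|) := by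
  rw [← Real.exp_add, Real.exp_le_exp]
  have h1 : |x + z * s| ≤ R + |z| * S := by
    calc |x + z * s| ≤ |x| + |z * s| := abs_add_le _ _
      _ = |x| + |z| * |s| := by rw [abs_mul]
      _ ≤ R + |z| * S := by gcongr
  nlinarith [mul_le_mul_of_nonneg_left h1 hc]

lemma integrable_smoothing {c : ℝ} (hc : 0 ≤ c) {φ : ℝ → ℝ} (hφ : Measurable φ)
    (hb : ∀ y, |φ y| ≤ Real.exp (c * |y|)) (x s : ℝ) :
    Integrable (fun z => φ (x + z * s)) (gaussianReal 0 1) := by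
  refine ((integrable_exp_abs_gaussian (c * |s|)).const_mul (Real.exp (c * |x|))).mono'
    (hφ.comp (by fun_prop)).aestronglyMeasurable (Eventually.of_forall fun z => ?_)
  exact (hb _).trans (exp_abs_add_le hc le_rfl le_rfl z)

/-- Gaussian smoothing at a vanishing scale, evaluated at moving points `u t → y`, recovers `φ y`
at each continuity point `y` of a function `φ` of exponential growth. -/
lemma tendsto_gaussian_smoothing {c : ℝ} (hc : 0 ≤ c) {φ : ℝ → ℝ} (hφ : Measurable φ)
    (hb : ∀ y, |φ y| ≤ Real.exp (c * |y|)) {l : Filter ℝ} [l.IsCountablyGenerated]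
    {u s : ℝ → ℝ} {y : ℝ} (hy : ContinuousAt φ y) (hu : Tendsto u l (𝓝 y))
    (hs : Tendsto s l (𝓝 0)) :
    Tendsto (fun t => ∫ z, φ (u t + z * s t) ∂(gaussianReal 0 1)) l (𝓝 (φ y)) := by
  have hlim : φ y = ∫ _z, φ y ∂(gaussianReal 0 1) := by simp
  rw [hlim]
  refine tendsto_integral_filter_of_dominated_convergence
    (fun z => Real.exp (c * (|y| + 1)) * Real.exp (c * 1 * |z|)) ?_ ?_ ?_ ?_
  · exact Eventually.of_forall fun t => (hφ.comp (by fun_prop)).aestronglyMeasurable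
  · have h1 : ∀ᶠ t in l, |u t| < |y| + 1 := hu.abs.eventually_lt_const (by linarith)
    have h2 : ∀ᶠ t in l, |s t| < 1 := hs.abs.eventually_lt_const (by simp)
    filter_upwards [h1, h2] with t ht1 ht2
    exact Eventually.of_forall fun z => (hb _).trans (exp_abs_add_le hc ht1.le ht2.le z)
  · exact (integrable_exp_abs_gaussian _).const_mul _
  · refine Eventually.of_forall fun z => ?_
    have : Tendsto (fun t => u t + z * s t) l (𝓝 y) := by
      simpa using hu.add (hs.const_mul z)
    exact hy.tendsto.comp this

/-! ### Differentiating the smoothed exponential -/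

/-- A sign function, with the value `-1` at `0`, so that `|sgnAux y| = 1` everywhere. -/
noncomputable def sgnAux (y : ℝ) : ℝ := if 0 < y then 1 else -1

lemma measurable_sgnAux : Measurable sgnAux :=
  Measurable.ite measurableSet_Ioi measurable_const measurable_const

lemma abs_sgnAux (y : ℝ) : |sgnAux y| = 1 := by
  unfold sgnAux; split_ifs <;> simp

lemma continuousAt_sgnAux {y : ℝ} (hy : y ≠ 0) : ContinuousAt sgnAux y := by
  rcases lt_or_gt_of_ne hy with h | h
  · refine (continuousAt_const (y := (-1 : ℝ))).congr ?_
    filter_upwards [eventually_lt_nhds h] with w hw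
    simp [sgnAux, not_lt.2 (le_of_lt hw)]
  · refine (continuousAt_const (y := (1 : ℝ))).congr ?_
    filter_upwards [eventually_gt_nhds h] with w hw
    simp [sgnAux, hw]

lemma hasDerivAt_abs_sgnAux {y : ℝ} (hy : y ≠ 0) : HasDerivAt (fun w : ℝ => |w|) (sgnAux y) y := by
  rcases lt_or_gt_of_ne hy with h | h
  · simpa [sgnAux, not_lt.2 h.le] using hasDerivAt_abs_neg h
  · simpa [sgnAux, h] using hasDerivAt_abs_pos h

/-- `F(s, y) = E[exp(c|y + s z|)]`. -/
noncomputable def smoothExp (c s y : ℝ) : ℝ :=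
  ∫ z, Real.exp (c * |y + z * s|) ∂(gaussianReal 0 1)

/-- `G(s, y) = E[sgn(y + s z) exp(c|y + s z|)]`. -/
noncomputable def smoothSgnExp (c s y : ℝ) : ℝ :=
  ∫ z, sgnAux (y + z * s) * Real.exp (c * |y + z * s|) ∂(gaussianReal 0 1)

lemma measurable_exp_abs (c : ℝ) : Measurable fun y : ℝ => Real.exp (c * |y|) := by
  fun_prop

lemma measurable_sgn_exp_abs (c : ℝ) :
    Measurable fun y : ℝ => sgnAux y * Real.exp (c * |y|) :=
  measurable_sgnAux.mul (measurable_exp_abs c)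

lemma one_le_smoothExp {c : ℝ} (hc : 0 ≤ c) (s y : ℝ) : 1 ≤ smoothExp c s y := by
  have h : ∫ _z, (1 : ℝ) ∂(gaussianReal 0 1) ≤ smoothExp c s y :=
    integral_mono (integrable_const _)
      (integrable_smoothing hc (measurable_exp_abs c) (fun y => by simp) y s)
      (fun z => Real.one_le_exp (by positivity))
  simpa using h

lemma abs_smoothSgnExp_le (c s y : ℝ) : |smoothSgnExp c s y| ≤ smoothExp c s y := by
  refine (abs_integral_le_integral_abs).trans (le_of_eq ?_)
  simp [smoothExp, abs_mul, abs_sgnAux]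

/-- Differentiation under the integral sign: for `s > 0` the kink of `|·|` is met at a single value
of `z`, which the Gaussian measure does not charge. -/
lemma hasDerivAt_smoothExp {c s : ℝ} (hc : 0 < c) (hs : 0 < s) (y : ℝ) :
    HasDerivAt (smoothExp c s) (c * smoothSgnExp c s y) y := by
  have hkey := hasDerivAt_integral_of_dominated_loc_of_lip (μ := gaussianReal 0 1)
    (F := fun y z => Real.exp (c * |y + z * s|)) (x₀ := y) (s := Metric.ball y 1)
    (F' := fun z => c * (sgnAux (y + z * s) * Real.exp (c * |y + z * s|)))
    (bound := fun z => c * (Real.exp (c * (|y| + 1)) * Real.exp (c * s * |z|)))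
    (Metric.ball_mem_nhds y one_pos) ?_ ?_ ?_ ?_ ?_ ?_
  · have h := hkey.2
    rw [integral_const_mul] at h
    exact h
  · exact Eventually.of_forall fun w => by fun_prop
  · exact integrable_smoothing hc.le (measurable_exp_abs c) (fun y => by simp) y s
  · exact (((measurable_sgn_exp_abs c).comp (by fun_prop : Measurable fun z : ℝ => y + z * s)).const_mul
      c).aestronglyMeasurable
  · refine Eventually.of_forall fun z => ?_
    refine LipschitzOnWith.of_dist_le_mul fun p hp q hq => ?_
    have hball : ∀ p ∈ Metric.ball y 1,
        Real.exp (c * |p + z * s|) ≤ Real.exp (c * (|y| + 1)) * Real.exp (c * s * |z|) := by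
      intro p hp
      rw [Metric.mem_ball, Real.dist_eq] at hp
      refine exp_abs_add_le hc.le ?_ (abs_of_pos hs).le z
      have := abs_sub_abs_le_abs_sub p y
      linarith
    -- `exp u - exp v ≤ exp u * (u - v)`, from `1 + (v - u) ≤ exp (v - u)`.
    have hone : ∀ p ∈ Metric.ball y 1, ∀ q : ℝ,
        Real.exp (c * |p + z * s|) - Real.exp (c * |q + z * s|) ≤
          c * (Real.exp (c * (|y| + 1)) * Real.exp (c * s * |z|)) * |p - q| := by
      intro p hp q
      set u := c * |p + z * s|
      set v := c * |q + z * s|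
      have h1 : Real.exp v = Real.exp u * Real.exp (v - u) := by
        rw [← Real.exp_add]; congr 1; ring
      have h2 := Real.add_one_le_exp (v - u)
      have h3 : u - v ≤ c * |p - q| := by
        have h4 := abs_sub_abs_le_abs_sub (p + z * s) (q + z * s)
        rw [add_sub_add_right_eq_sub] at h4
        have := mul_le_mul_of_nonneg_left h4 hc.le
        simp only [u, v]; linarith
      have h5 : Real.exp u - Real.exp v ≤ Real.exp u * (u - v) := by
        rw [h1]; nlinarith [Real.exp_pos u]
      have h6 : Real.exp u * (u - v) ≤ Real.exp u * (c * |p - q|) := by gcongr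
      have h7 : Real.exp u * (c * |p - q|) ≤
          (Real.exp (c * (|y| + 1)) * Real.exp (c * s * |z|)) * (c * |p - q|) := by
        gcongr
        exact hball p hp
      linarith
    rw [Real.dist_eq, Real.dist_eq, Real.coe_nnabs,
      abs_of_pos (a := c * (Real.exp (c * (|y| + 1)) * Real.exp (c * s * |z|))) (by positivity)]
    rw [abs_le]
    constructor
    · have := hone q hq p
      rw [abs_sub_comm] at this
      linarith
    · exact hone p hp q
  · exact ((integrable_exp_abs_gaussian _).const_mul _).const_mul _
  · have hne : ∀ᵐ z ∂(gaussianReal 0 1), z ≠ -y / s := by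
      have := nullSingletonClass_gaussianReal (μ := 0) (v := 1) one_ne_zero
      simp [ae_iff]
    filter_upwards [hne] with z hz
    have hz' : y + z * s ≠ 0 := fun h => hz (by field_simp; linarith)
    have h1 : HasDerivAt (fun w : ℝ => |w + z * s|) (sgnAux (y + z * s)) y :=
      (hasDerivAt_abs_sgnAux hz').comp_add_const y (z * s)
    exact (h1.const_mul c).exp.congr_deriv (by ring)

/-! ### Bounds and limits for `A` and its derivative -/

lemma A_eq (b m' t x : ℝ) :
    A b m' t x = (1 / m') * Real.log (smoothExp m' (Real.sqrt (b - t)) x) := rfl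

lemma hasDerivAt_A {b m' t : ℝ} (hm' : 0 < m') (ht : t < b) (y : ℝ) :
    HasDerivAt (A b m' t)
      (smoothSgnExp m' (Real.sqrt (b - t)) y / smoothExp m' (Real.sqrt (b - t)) y) y := by
  have hpos := one_le_smoothExp hm'.le (Real.sqrt (b - t)) y
  have h := ((hasDerivAt_smoothExp hm' (Real.sqrt_pos.2 (sub_pos.2 ht)) y).log
    (by linarith)).const_mul (1 / m')
  exact h.congr_deriv (by field_simp)

lemma abs_deriv_A_le {b m' t : ℝ} (hm' : 0 < m') (ht : t < b) (y : ℝ) :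
    |deriv (A b m' t) y| ≤ 1 := by
  have hpos := one_le_smoothExp hm'.le (Real.sqrt (b - t)) y
  rw [(hasDerivAt_A hm' ht y).deriv, abs_div, abs_of_pos (by linarith : 0 < smoothExp _ _ _),
    div_le_one (by linarith)]
  exact abs_smoothSgnExp_le _ _ _

/-- Linear growth of `A(t, ·)`, uniformly in `t`. -/
lemma A_le {a b m' t : ℝ} (hm' : 0 < m') (ht : a < t) (y : ℝ) :
    A b m' t y ≤ |y| + (1 / m') * Real.log
      (∫ z, Real.exp (m' * Real.sqrt (b - a) * |z|) ∂(gaussianReal 0 1)) := by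
  have hpos := one_le_smoothExp hm'.le (Real.sqrt (b - t)) y
  have hle : smoothExp m' (Real.sqrt (b - t)) y ≤ Real.exp (m' * |y|) *
      ∫ z, Real.exp (m' * Real.sqrt (b - a) * |z|) ∂(gaussianReal 0 1) := by
    rw [← integral_const_mul]
    refine integral_mono
      (integrable_smoothing hm'.le (measurable_exp_abs m') (fun y => by simp) _ _)
      ((integrable_exp_abs_gaussian _).const_mul _) fun z => ?_
    refine exp_abs_add_le hm'.le le_rfl ?_ z
    rw [abs_of_nonneg (Real.sqrt_nonneg _)]
    exact Real.sqrt_le_sqrt (by linarith)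
  have hI : 0 < ∫ z, Real.exp (m' * Real.sqrt (b - a) * |z|) ∂(gaussianReal 0 1) :=
    integral_exp_pos (integrable_exp_abs_gaussian _)
  have hlog := Real.log_le_log (by linarith) hle
  rw [Real.log_mul (Real.exp_pos _).ne' hI.ne', Real.log_exp] at hlog
  rw [A_eq]
  have := mul_le_mul_of_nonneg_left hlog (by positivity : 0 ≤ 1 / m')
  refine this.trans (le_of_eq ?_)
  field_simp

lemma tendsto_sqrt_sub (b : ℝ) : Tendsto (fun t => Real.sqrt (b - t)) (𝓝[<] b) (𝓝 0) := by
  have h : Tendsto (fun t => Real.sqrt (b - t)) (𝓝 b) (𝓝 (Real.sqrt (b - b))) :=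
    Continuous.tendsto (by fun_prop) b
  rw [sub_self, Real.sqrt_zero] at h
  exact h.mono_left nhdsWithin_le_nhds

lemma tendsto_smoothExp {b m' : ℝ} (hm' : 0 < m') {u : ℝ → ℝ} {y : ℝ}
    (hu : Tendsto u (𝓝[<] b) (𝓝 y)) :
    Tendsto (fun t => smoothExp m' (Real.sqrt (b - t)) (u t)) (𝓝[<] b)
      (𝓝 (Real.exp (m' * |y|))) :=
  tendsto_gaussian_smoothing (φ := fun y => Real.exp (m' * |y|)) hm'.le (measurable_exp_abs m')
    (fun y => by simp) (by fun_prop) hu (tendsto_sqrt_sub b)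

lemma tendsto_A {b m' : ℝ} (hm' : 0 < m') {u : ℝ → ℝ} {y : ℝ}
    (hu : Tendsto u (𝓝[<] b) (𝓝 y)) :
    Tendsto (fun t => A b m' t (u t)) (𝓝[<] b) (𝓝 |y|) := by
  have h := ((tendsto_smoothExp hm' hu).log (Real.exp_pos _).ne').const_mul (1 / m')
  rw [Real.log_exp, ← mul_assoc, one_div_mul_cancel hm'.ne', one_mul] at h
  exact h

lemma tendsto_deriv_A_sq {b m' : ℝ} (hm' : 0 < m') {u : ℝ → ℝ} {y : ℝ} (hy : y ≠ 0)
    (hu : Tendsto u (𝓝[<] b) (𝓝 y)) :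
    Tendsto (fun t => (deriv (A b m' t) (u t)) ^ 2) (𝓝[<] b) (𝓝 1) := by
  have hG : Tendsto (fun t => smoothSgnExp m' (Real.sqrt (b - t)) (u t)) (𝓝[<] b)
      (𝓝 (sgnAux y * Real.exp (m' * |y|))) :=
    tendsto_gaussian_smoothing (φ := fun y => sgnAux y * Real.exp (m' * |y|)) hm'.le
      (measurable_sgn_exp_abs m') (fun y => by simp [abs_mul, abs_sgnAux])
      ((continuousAt_sgnAux hy).mul (by fun_prop)) hu (tendsto_sqrt_sub b)
  have h := (hG.div (tendsto_smoothExp hm' hu) (Real.exp_pos _).ne').pow 2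
  rw [mul_div_cancel_right₀ _ (Real.exp_pos _).ne', ← sq_abs (sgnAux y), abs_sgnAux,
    one_pow] at h
  refine h.congr' ?_
  filter_upwards [self_mem_nhdsWithin] with t ht
  rw [(hasDerivAt_A hm' ht (u t)).deriv]
  rfl

/-! ### Passing to the limit in the outer expectation -/

/-- Convergence of expectations of `exp(m A)` against a weight in `[-1, 1]` whose limit is `1` away
from the kink. The weights of interest are `1` and `(∂ₓA)²`. -/
lemma tendsto_weighted {a b m m' : ℝ} (hab : a < b) (hm : 0 < m) (hm' : 0 < m') (x : ℝ)
    (w : ℝ → ℝ → ℝ) (hw : ∀ t, Measurable (w t)) (hw1 : ∀ t < b, ∀ y, |w t y| ≤ 1)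
    (hlim : ∀ (u : ℝ → ℝ) (y : ℝ), y ≠ 0 → Tendsto u (𝓝[<] b) (𝓝 y) →
      Tendsto (fun t => w t (u t)) (𝓝[<] b) (𝓝 1)) :
    Tendsto (fun t => ∫ z, w t (x + z * Real.sqrt (t - a)) *
        Real.exp (m * A b m' t (x + z * Real.sqrt (t - a))) ∂(gaussianReal 0 1)) (𝓝[<] b)
      (𝓝 (∫ z, Real.exp (m * |x + z * Real.sqrt (b - a)|) ∂(gaussianReal 0 1))) := by
  obtain ⟨K, hK⟩ : ∃ K, ∀ t, a < t → ∀ y, A b m' t y ≤ |y| + K :=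
    ⟨_, fun t ht y => A_le hm' ht y⟩
  refine tendsto_integral_filter_of_dominated_convergence (fun z => Real.exp (m * K) *
    (Real.exp (m * |x|) * Real.exp (m * Real.sqrt (b - a) * |z|))) ?_ ?_ ?_ ?_
  · filter_upwards [self_mem_nhdsWithin] with t ht
    have hA : Continuous (A b m' t) :=
      continuous_iff_continuousAt.2 fun y => (hasDerivAt_A hm' ht y).continuousAt
    have h1 : Measurable fun z : ℝ => w t (x + z * Real.sqrt (t - a)) :=
      (hw t).comp (by fun_prop)
    have h2 : Measurable fun z : ℝ => Real.exp (m * A b m' t (x + z * Real.sqrt (t - a))) :=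
      Continuous.measurable (by fun_prop)
    exact (h1.mul h2).aestronglyMeasurable
  · have hat : ∀ᶠ t in 𝓝[<] b, a < t :=
      (eventually_gt_nhds hab).filter_mono nhdsWithin_le_nhds
    filter_upwards [self_mem_nhdsWithin, hat] with t ht hta
    have htb : t < b := ht
    refine Eventually.of_forall fun z => ?_
    rw [norm_mul, Real.norm_eq_abs, Real.norm_eq_abs, Real.abs_exp]
    have h1 := mul_le_mul_of_nonneg_right (hw1 t ht (x + z * Real.sqrt (t - a)))
      (Real.exp_pos (m * A b m' t (x + z * Real.sqrt (t - a)))).le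
    rw [one_mul] at h1
    refine h1.trans ?_
    have h2 : Real.exp (m * A b m' t (x + z * Real.sqrt (t - a))) ≤
        Real.exp (m * K) * Real.exp (m * |x + z * Real.sqrt (t - a)|) := by
      rw [← Real.exp_add, Real.exp_le_exp]
      nlinarith [hK t hta (x + z * Real.sqrt (t - a))]
    refine h2.trans (mul_le_mul_of_nonneg_left ?_ (Real.exp_pos _).le)
    refine exp_abs_add_le hm.le le_rfl ?_ z
    rw [abs_of_nonneg (Real.sqrt_nonneg _)]
    exact Real.sqrt_le_sqrt (by linarith)
  · exact ((integrable_exp_abs_gaussian _).const_mul _).const_mul _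
  · have hs : 0 < Real.sqrt (b - a) := Real.sqrt_pos.2 (sub_pos.2 hab)
    have hne : ∀ᵐ z ∂(gaussianReal 0 1), z ≠ -x / Real.sqrt (b - a) := by
      have := nullSingletonClass_gaussianReal (μ := 0) (v := 1) one_ne_zero
      simp [ae_iff]
    filter_upwards [hne] with z hz
    have hz' : x + z * Real.sqrt (b - a) ≠ 0 := fun h => hz (by field_simp; linarith)
    have hu : Tendsto (fun t => x + z * Real.sqrt (t - a)) (𝓝[<] b)
        (𝓝 (x + z * Real.sqrt (b - a))) :=
      (Continuous.tendsto (by fun_prop : Continuous fun t => x + z * Real.sqrt (t - a)) b).mono_left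
        nhdsWithin_le_nhds
    simpa using (hlim _ _ hz' hu).mul
      ((Real.continuous_exp.tendsto _).comp ((tendsto_A hm' hu).const_mul m))

/-- `C(t,x) → 1` as `t → b⁻`. -/
theorem C_tendsto_one (a b m m' : ℝ) (ha : 0 ≤ a) (hab : a < b)
    (hm : 0 < m) (hmm' : m < m') :
    ∀ x : ℝ,
      Filter.Tendsto (fun t => C a b m m' t x) (nhdsWithin b (Set.Iio b)) (nhds 1) := by
  intro x
  have hm' : 0 < m' := hm.trans hmm'
  have hN := tendsto_weighted hab hm hm' x (fun t y => (deriv (A b m' t) y) ^ 2)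
    (fun t => (measurable_deriv _).pow_const 2)
    (fun t ht y => by
      rw [abs_pow]
      exact pow_le_one₀ (abs_nonneg _) (abs_deriv_A_le hm' ht y))
    (fun u y hy hu => tendsto_deriv_A_sq hm' hy hu)
  have hD := tendsto_weighted hab hm hm' x (fun _ _ => 1) (fun _ => measurable_const)
    (fun _ _ _ => by simp) (fun _ _ _ _ => tendsto_const_nhds)
  simp only [one_mul] at hD
  have hpos : 0 < ∫ z, Real.exp (m * |x + z * Real.sqrt (b - a)|) ∂(gaussianReal 0 1) :=
    lt_of_lt_of_le one_pos (one_le_smoothExp hm.le (Real.sqrt (b - a)) x)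
  have h := hN.div hD hpos.ne'
  rw [div_self hpos.ne'] at h
  refine h.congr' ?_
  -- A positive limit keeps the denominator positive near `b`, so `exp (m B)` equals it.
  filter_upwards [hD.eventually_const_lt hpos] with t ht
  have hV : ∀ y, V a b m m' t x y = Real.exp (m * A b m' t y) /
      ∫ z, Real.exp (m * A b m' t (x + z * Real.sqrt (t - a))) ∂(gaussianReal 0 1) := by
    intro y
    rw [V, mul_sub, Real.exp_sub]
    congr 1
    rw [B, ← mul_assoc, mul_one_div_cancel hm.ne', one_mul, Real.exp_log ht]
  simp only [C, hV, ← mul_div_assoc, integral_div, Pi.div_apply]
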